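/- In a coherent quantale A, for any m-prime element p and compact element c: c ≤ O(p) if and only if c^⊥ ≰ p, where O(p) = ⋁{d compact : d·e = 0 for some compact e ≰ p}. -/

import Mathlib

open CompleteLattice

/-- A commutative integral quantale: a complete lattice with a commutative monoid
structure whose unit is the top element, with multiplication distributing over
arbitrary joins. -/
class CommQuantale (A : Type*) extends CompleteLattice A, CommMonoid A where
  one_eq_top : (1 : A) = ⊤
  mul_sSup_distrib : ∀ (a : A) (S : Set A), a * sSup S = ⨆ b ∈ S, a * b

namespace CommQuantale

variable {A : Type*} [CommQuantale A]

/-- m-prime element -/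
def MPrime (p : A) : Prop := p < 1 ∧ ∀ a b : A, a * b ≤ p → a ≤ p ∨ b ≤ p

/-- radical -/
def rad (a : A) : A := sInf {p : A | MPrime p ∧ a ≤ p}

/-- annihilator / negation `c^⊥ = ⋁{x | c·x = 0}` -/
def perp (c : A) : A := sSup {x : A | c * x = ⊥}

/-- residuation `c → b = ⋁{x | c·x ≤ b}` -/
def resid (c b : A) : A := sSup {x : A | c * x ≤ b}

/-- pure element -/
def IsPure (a : A) : Prop :=
  ∀ c : A, IsCompactElement c → c ≤ a → a ⊔ perp c = 1

/-- weakly pure element -/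
def IsWPure (a : A) : Prop :=
  ∀ c : A, IsCompactElement c → c ≤ a → a ⊔ resid c (rad ⊥) = 1

/-- complemented element -/
def IsComplemented (e : A) : Prop := ∃ f : A, e ⊔ f = 1 ∧ e ⊓ f = ⊥

/-- regular element: a join of complemented elements -/
def IsRegular (a : A) : Prop :=
  ∃ S : Set A, (∀ e ∈ S, IsComplemented e) ∧ a = sSup S

/-- Ker operator -/
def Ker (a : A) : A :=
  sSup {d : A | IsCompactElement d ∧ d ≤ a ∧ a ⊔ perp d = 1}

/-- O operator: `O(p) = ⋁{c compact | c^⊥ ≰ p}` -/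
def O (p : A) : A := sSup {c : A | IsCompactElement c ∧ ¬ perp c ≤ p}

/-- O operator, as in Section 4: `O(p) = ⋁{d compact | d·e = 0 for some compact e ≰ p}` -/
def O' (p : A) : A :=
  sSup {d : A | IsCompactElement d ∧ ∃ e : A, IsCompactElement e ∧ ¬ e ≤ p ∧ d * e = ⊥}

/-- algebraic quantale: every element is the join of the compact elements below it -/
def Algebraic (A : Type*) [CommQuantale A] : Prop :=
  ∀ a : A, a = sSup {c : A | IsCompactElement c ∧ c ≤ a}

/-- coherent quantale -/
def Coherent (A : Type*) [CommQuantale A] : Prop :=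
  Algebraic A ∧ IsCompactElement (1 : A) ∧
    ∀ c d : A, IsCompactElement c → IsCompactElement d → IsCompactElement (c * d)

end CommQuantale

open CommQuantale

namespace CommQuantale

variable {A : Type*} [CommQuantale A]

instance : IsQuantale A where
  mul_sSup_distrib := CommQuantale.mul_sSup_distrib
  sSup_mul_distrib S a := by
    simpa only [mul_comm] using CommQuantale.mul_sSup_distrib a S

theorem mul_eq_bot_of_le {a b c d : A} (hac : a ≤ c) (hbd : b ≤ d) (h : c * d = ⊥) :
    a * b = ⊥ :=
  le_bot_iff.mp (h ▸ mul_le_mul' hac hbd)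

/-- Finitely many elements, each annihilated by some element not below an m-prime `p`, are
annihilated by a common such element. -/
theorem MPrime.exists_sup_mul_eq_bot {p : A} (hp : MPrime p) (t : Finset A)
    (ht : ∀ d ∈ t, ∃ e : A, ¬ e ≤ p ∧ d * e = ⊥) :
    ∃ e : A, ¬ e ≤ p ∧ t.sup id * e = ⊥ := by
  classical
  induction t using Finset.induction_on with
  | empty => exact ⟨1, hp.1.not_ge, by simp⟩
  | insert d t _ ih =>
    obtain ⟨e, hep, hde⟩ := ht d (Finset.mem_insert_self d t)
    obtain ⟨f, hfp, htf⟩ := ih fun x hx => ht x (Finset.mem_insert_of_mem hx)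
    refine ⟨e * f, fun h => (hp.2 e f h).elim hep hfp, ?_⟩
    rw [Finset.sup_insert, id, Quantale.sup_mul_distrib, ← mul_assoc, hde, mul_left_comm, htf,
      Quantale.bot_mul, Quantale.mul_bot, sup_bot_eq]

end CommQuantale

theorem stmt17 {A : Type*} [CommQuantale A]
    (hcoh : Coherent A) (p c : A) (hp : MPrime p) (hc : IsCompactElement c) :
    c ≤ O' p ↔ ¬ perp c ≤ p := by
  constructor
  · intro h hperp
    obtain ⟨t, htS, hct⟩ :=
      (isCompactElement_iff_exists_le_sSup_of_le_sSup A c).mp hc _ h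
    obtain ⟨e, hep, hte⟩ := hp.exists_sup_mul_eq_bot t fun d hd =>
      let ⟨_, e, _, hep, hde⟩ := htS hd
      ⟨e, hep, hde⟩
    have hce : c * e = ⊥ := mul_eq_bot_of_le hct le_rfl hte
    exact hep ((le_sSup hce : e ≤ perp c).trans hperp)
  · intro h
    obtain ⟨x, hcx, hxp⟩ : ∃ x : A, c * x = ⊥ ∧ ¬ x ≤ p := by
      by_contra! H
      exact h (sSup_le H)
    obtain ⟨e, ⟨he, hex⟩, hep⟩ :
        ∃ e ∈ {e : A | IsCompactElement e ∧ e ≤ x}, ¬ e ≤ p := by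
      by_contra! H
      exact hxp ((hcoh.1 x).trans_le (sSup_le H))
    exact le_sSup ⟨hc, e, he, hep, mul_eq_bot_of_le le_rfl hex hcx⟩
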